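/- In the setting of the dgl (L₁, D) built from minimal Quillen models of 2-cones, let A ∈ 𝕃(V₀), let Ā ∈ 𝕄(V₀) be any representative of A, and let T ∈ 𝕃(W₀). Then D(Ā ⋆ T) = −σ_A(T) + (−1)^{|A||T|} σ_T(A). -/

import Mathlib

universe u

/-- A graded Lie algebra over `ℚ`: a `ℤ`-graded vector space with a bilinear bracket
satisfying graded antisymmetry and the graded Jacobi identity on homogeneous elements. -/
structure GLA (Lc : Type u) [AddCommGroup Lc] [Module ℚ Lc] where
  grade : ℤ → Submodule ℚ Lc
  internal : DirectSum.IsInternal grade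
  br : Lc →ₗ[ℚ] Lc →ₗ[ℚ] Lc
  br_mem : ∀ {i j : ℤ} {x y : Lc}, x ∈ grade i → y ∈ grade j → br x y ∈ grade (i + j)
  antisymm : ∀ {i j : ℤ} {x y : Lc}, x ∈ grade i → y ∈ grade j →
      br x y = -((-1 : ℚ) ^ (i * j) • br y x)
  jacobi : ∀ {i j : ℤ} {x y : Lc} (z : Lc), x ∈ grade i → y ∈ grade j →
      br x (br y z) = br (br x y) z + (-1 : ℚ) ^ (i * j) • br y (br x z)

namespace GLA

variable {Lc : Type u} [AddCommGroup Lc] [Module ℚ Lc]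

/-- The Lie subalgebra (as a submodule closed under the bracket) generated by
a graded family of subspaces. -/
def lieSub (G : GLA Lc) (p : ℤ → Submodule ℚ Lc) : Submodule ℚ Lc :=
  sInf {q | (∀ i, p i ≤ q) ∧ ∀ x ∈ q, ∀ y ∈ q, G.br x y ∈ q}

/-- The submodule of decomposable elements of `L`: the span of all brackets. -/
def dec (G : GLA Lc) : Submodule ℚ Lc :=
  Submodule.span ℚ {x : Lc | ∃ a b : Lc, x = G.br a b}

/-- A graded Lie algebra is reduced if it vanishes in degrees `≤ 0`. -/
def Reduced (G : GLA Lc) : Prop := ∀ i : ℤ, i ≤ 0 → G.grade i = ⊥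

end GLA


/-- Trees of the free graded linear magma on the graded subspace family `P`
(homogeneous generators and formal binary products). -/
inductive Mag {Lc : Type u} [AddCommGroup Lc] [Module ℚ Lc]
    (P : ℤ → Submodule ℚ Lc) : Type u
  | of (i : ℤ) (v : Lc) (hv : v ∈ P i) : Mag P
  | mul : Mag P → Mag P → Mag P

namespace Mag

variable {Lc : Type u} [AddCommGroup Lc] [Module ℚ Lc] {P : ℤ → Submodule ℚ Lc}

/-- Degree of a magma element. -/
def deg : Mag P → ℤ
  | of i _ _ => i
  | mul A B => deg A + deg B

/-- The class of a magma element in the (free) graded Lie algebra. -/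
def real (G : GLA Lc) : Mag P → Lc
  | of _ v _ => v
  | mul A B => G.br (real G A) (real G B)

/-- The star operator `⋆ : 𝕄(V) ⊗ 𝕃(W) → L`, applied to a homogeneous element `T`
of degree `t`, defined recursively by `a ⋆ T = 0` for a generator `a` and
`AB ⋆ T = (-1)^{|A|} σ_Ā σ_B̄ (T) + (-1)^{|B||T|} [A ⋆ T, B̄] + [Ā, B ⋆ T]`. -/
def star (G : GLA Lc) (sg : ℤ → Lc → (Lc →ₗ[ℚ] Lc)) (t : ℤ) : Mag P → Lc → Lc
  | of _ _ _, _ => 0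
  | mul A B, T =>
      (-1 : ℚ) ^ deg A • sg (deg A) (real G A) (sg (deg B) (real G B) T)
        + (-1 : ℚ) ^ (deg B * t) • G.br (star G sg t A T) (real G B)
        + G.br (real G A) (star G sg t B T)

end Mag

/-!
For `A ∈ 𝕃(V₀)` consider the derivation `δ_A = [D, σ_A] - ad A`. It kills `𝕃(W₀)` and is `-ad A`
on `𝕃(V₀)`. Two derivations agree on a Lie subalgebra as soon as they agree on its generators; in
this way one sees first that `δ_A` commutes with `σ_w` on `𝕃(V₀)` for every generator `w ∈ W₀`,
and then, since `σ_B w = ± σ_w B`, that `[δ_A, σ_B] = -(-1)^{|A|} σ_{[A,B]}` on `𝕃(W₀)`. This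
expresses `D σ_A σ_B T` through `σ_{[A,B]} T`, `[A, σ_B T]` and `[σ_A T, B]`. The recursion for `⋆`
is designed so that the last two terms cancel in `D (AB ⋆ T)`, and the formula follows by induction
on the magma element.
-/

namespace GLA

variable {Lc : Type u} [AddCommGroup Lc] [Module ℚ Lc] {G : GLA Lc} {p q : ℤ → Submodule ℚ Lc}

theorem le_lieSub (i : ℤ) : p i ≤ G.lieSub p :=
  le_sInf fun _ hq => hq.1 i

theorem br_mem_lieSub {x y : Lc} (hx : x ∈ G.lieSub p) (hy : y ∈ G.lieSub p) :
    G.br x y ∈ G.lieSub p := by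
  simp only [lieSub, Submodule.mem_sInf] at *
  exact fun q hq => hq.2 _ (hx q hq) _ (hy q hq)

theorem lieSub_mono (h : ∀ i, p i ≤ q i) : G.lieSub p ≤ G.lieSub q :=
  sInf_le ⟨fun i => (h i).trans (le_lieSub i), fun _ hx _ hy => br_mem_lieSub hx hy⟩

theorem lieSub_left_le : G.lieSub p ≤ G.lieSub (p ⊔ q) :=
  lieSub_mono fun _ => le_sup_left

theorem lieSub_right_le : G.lieSub q ≤ G.lieSub (p ⊔ q) :=
  lieSub_mono fun _ => le_sup_right

theorem lieSub_le_of_homogeneous (hp : ∀ i, p i ≤ G.grade i) {S : Submodule ℚ Lc}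
    (hpS : ∀ i, p i ≤ S)
    (hbr : ∀ {m n : ℤ} {x y : Lc}, x ∈ G.grade m → y ∈ G.grade n → x ∈ S → y ∈ S →
      G.br x y ∈ S) :
    G.lieSub p ≤ S := by
  let H : Set Lc := {x | x ∈ S ∧ ∃ n, x ∈ G.grade n}
  have lieSub_le_span : G.lieSub p ≤ Submodule.span ℚ H := by
    refine sInf_le ⟨fun i v hv => Submodule.subset_span ⟨hpS i hv, i, hp i hv⟩,
      fun x hx y hy => ?_⟩
    refine LinearMap.BilinMap.apply_apply_mem_of_mem_span _ H H G.br ?_ x y hx hy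
    rintro x ⟨hxS, m, hx⟩ y ⟨hyS, n, hy⟩
    exact Submodule.subset_span ⟨hbr hx hy hxS hyS, m + n, G.br_mem hx hy⟩
  exact lieSub_le_span.trans (Submodule.span_le.2 fun _ hx => hx.1)

/-- `f` is a derivation of degree `d` of the graded Lie algebra `G`. As in `GLA`, the Leibniz rule
is required only when the left factor is homogeneous, since only then does its sign make sense. -/
structure IsDerivation (G : GLA Lc) (d : ℤ) (f : Lc →ₗ[ℚ] Lc) : Prop where
  map_mem : ∀ {n : ℤ} {x : Lc}, x ∈ G.grade n → f x ∈ G.grade (n + d)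
  leibniz : ∀ {n : ℤ} {x : Lc}, x ∈ G.grade n → ∀ y : Lc,
    f (G.br x y) = G.br (f x) y + (-1 : ℚ) ^ (d * n) • G.br x (f y)

/-- The graded commutator `[f, g] = f g - (-1)^{de} g f` of linear maps `f`, `g` of degrees
`d`, `e`. -/
def gradedCommutator (d e : ℤ) (f g : Lc →ₗ[ℚ] Lc) : Lc →ₗ[ℚ] Lc :=
  f ∘ₗ g - (-1 : ℚ) ^ (d * e) • g ∘ₗ f

theorem gradedCommutator_apply (d e : ℤ) (f g : Lc →ₗ[ℚ] Lc) (x : Lc) :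
    gradedCommutator d e f g x = f (g x) - (-1 : ℚ) ^ (d * e) • g (f x) :=
  rfl

theorem isDerivation_br {a : ℤ} {A : Lc} (hA : A ∈ G.grade a) : G.IsDerivation a (G.br A) where
  map_mem hx := add_comm a _ ▸ G.br_mem hA hx
  leibniz hx y := G.jacobi y hA hx

namespace IsDerivation

variable {d e : ℤ} {f g : Lc →ₗ[ℚ] Lc}

theorem sub (hf : G.IsDerivation d f) (hg : G.IsDerivation d g) : G.IsDerivation d (f - g) where
  map_mem hx := sub_mem (hf.map_mem hx) (hg.map_mem hx)
  leibniz hx y := by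
    simp only [LinearMap.sub_apply, hf.leibniz hx, hg.leibniz hx, map_sub]
    module

theorem smul (c : ℚ) (hf : G.IsDerivation d f) : G.IsDerivation d (c • f) where
  map_mem hx := Submodule.smul_mem _ _ (hf.map_mem hx)
  leibniz hx y := by
    simp only [LinearMap.smul_apply, hf.leibniz hx, map_smul]
    module

theorem gradedCommutator (hf : G.IsDerivation d f) (hg : G.IsDerivation e g) :
    G.IsDerivation (d + e) (GLA.gradedCommutator d e f g) where
  map_mem {n x} hx := by
    have hfg : f (g x) ∈ G.grade (n + (d + e)) := by
      convert hf.map_mem (hg.map_mem hx) using 2; ring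
    have hgf : g (f x) ∈ G.grade (n + (d + e)) := by
      convert hg.map_mem (hf.map_mem hx) using 2; ring
    exact sub_mem hfg (Submodule.smul_mem _ _ hgf)
  leibniz {n x} hx y := by
    simp only [gradedCommutator_apply, hf.leibniz hx, hg.leibniz hx, map_add, map_smul,
      hf.leibniz (hg.map_mem hx), hg.leibniz (hf.map_mem hx), map_sub, LinearMap.sub_apply,
      LinearMap.smul_apply]
    match_scalars <;> grind [neg_one_zpow_eq_ite, Int.even_add]

theorem eqOn_lieSub (hf : G.IsDerivation d f) (hg : G.IsDerivation d g)
    (hp : ∀ i, p i ≤ G.grade i) (hfg : ∀ {i : ℤ} {v : Lc}, v ∈ p i → f v = g v)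
    {x : Lc} (hx : x ∈ G.lieSub p) : f x = g x := by
  refine lieSub_le_of_homogeneous (S := LinearMap.eqLocus f g) hp (fun i v hv => hfg hv) ?_ hx
  intro m n x y hx _ hfgx hfgy
  rw [LinearMap.mem_eqLocus] at *
  rw [hf.leibniz hx, hg.leibniz hx, hfgx, hfgy]

theorem eq_zero_of_mem_lieSub (hf : G.IsDerivation d f) (hp : ∀ i, p i ≤ G.grade i)
    (hfp : ∀ {i : ℤ} {v : Lc}, v ∈ p i → f v = 0) {x : Lc} (hx : x ∈ G.lieSub p) : f x = 0 := by
  have zero_isDerivation : G.IsDerivation d 0 := by simpa using hf.smul 0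
  exact hf.eqOn_lieSub zero_isDerivation hp hfp hx

end IsDerivation

end GLA

/-- What the formula for `D (Ā ⋆ T)` needs of the dgl `(L₁, D)` with its derivations `σ_A`,
where `V` and `W` stand for `V₀` and `W₀`. The suspension generator `s(v ⊗ w)` is encoded as
`σ_v w`, of which `σ_w v` is a signed copy by `σ_apply_left`. -/
structure IsStarSetting {Lc : Type u} [AddCommGroup Lc] [Module ℚ Lc] (G : GLA Lc)
    (V W : ℤ → Submodule ℚ Lc) (D : Lc →ₗ[ℚ] Lc) (σ : ℤ → Lc → (Lc →ₗ[ℚ] Lc)) : Prop where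
  left_le : ∀ i, V i ≤ G.grade i
  right_le : ∀ j, W j ≤ G.grade j
  isDerivation_D : G.IsDerivation (-1) D
  D_left : ∀ {i : ℤ} {v : Lc}, v ∈ V i → D v = 0
  D_right : ∀ {j : ℤ} {w : Lc}, w ∈ W j → D w = 0
  isDerivation_σ : ∀ {a : ℤ} {A : Lc}, A ∈ G.lieSub (V ⊔ W) → A ∈ G.grade a →
    G.IsDerivation (a + 1) (σ a A)
  σ_apply_left : ∀ {a i : ℤ} {A v : Lc}, A ∈ G.lieSub (V ⊔ W) → A ∈ G.grade a → v ∈ V i →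
    σ a A v = (-1 : ℚ) ^ (i * a) • σ i v A
  σ_apply_right : ∀ {a j : ℤ} {A w : Lc}, A ∈ G.lieSub (V ⊔ W) → A ∈ G.grade a → w ∈ W j →
    σ a A w = (-1 : ℚ) ^ (j * a) • σ j w A
  σ_left_left : ∀ {i k : ℤ} {u v : Lc}, u ∈ V i → v ∈ V k → σ i u v = 0
  σ_suspension : ∀ {a i j : ℤ} {A v w : Lc}, A ∈ G.lieSub (V ⊔ W) → A ∈ G.grade a →
    v ∈ V i → w ∈ W j → σ a A (σ i v w) = 0
  D_suspension : ∀ {i j : ℤ} {v w : Lc}, v ∈ V i → w ∈ W j → D (σ i v w) = G.br v w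

namespace IsStarSetting

open GLA

variable {Lc : Type u} [AddCommGroup Lc] [Module ℚ Lc] {G : GLA Lc}
  {V W : ℤ → Submodule ℚ Lc} {D : Lc →ₗ[ℚ] Lc} {σ : ℤ → Lc → (Lc →ₗ[ℚ] Lc)}
  {a b i j t : ℤ} {A B v w x T : Lc}

theorem D_eq_zero_left (h : IsStarSetting G V W D σ) (hA : A ∈ G.lieSub V) : D A = 0 :=
  h.isDerivation_D.eq_zero_of_mem_lieSub h.left_le h.D_left hA

theorem D_eq_zero_right (h : IsStarSetting G V W D σ) (hT : T ∈ G.lieSub W) : D T = 0 :=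
  h.isDerivation_D.eq_zero_of_mem_lieSub h.right_le h.D_right hT

theorem D_br_left (h : IsStarSetting G V W D σ) {n : ℤ} (hx : x ∈ G.grade n)
    (hB : B ∈ G.lieSub V) : D (G.br x B) = G.br (D x) B := by
  rw [h.isDerivation_D.leibniz hx, h.D_eq_zero_left hB, map_zero, smul_zero, add_zero]

theorem D_br_right (h : IsStarSetting G V W D σ) (hA : A ∈ G.lieSub V) (ha : A ∈ G.grade a)
    (x : Lc) : D (G.br A x) = (-1 : ℚ) ^ a • G.br A (D x) := by
  rw [h.isDerivation_D.leibniz ha, h.D_eq_zero_left hA, map_zero, LinearMap.zero_apply, zero_add,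
    neg_one_mul, zpow_neg, ← inv_zpow, inv_neg_one]

theorem σ_eq_zero (h : IsStarSetting G V W D σ) (hA : A ∈ G.lieSub V) (ha : A ∈ G.grade a)
    (hx : x ∈ G.lieSub V) : σ a A x = 0 := by
  have σ_generator {i : ℤ} {v : Lc} (hv : v ∈ V i) : σ i v A = 0 :=
    (h.isDerivation_σ (lieSub_left_le (le_lieSub i hv)) (h.left_le i hv)).eq_zero_of_mem_lieSub
      h.left_le (h.σ_left_left hv) hA
  refine (h.isDerivation_σ (lieSub_left_le hA) ha).eq_zero_of_mem_lieSub h.left_le (fun hv => ?_) hx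
  rw [h.σ_apply_left (lieSub_left_le hA) ha hv, σ_generator hv, smul_zero]

theorem σ_br (h : IsStarSetting G V W D σ) (hA : A ∈ G.lieSub V) (ha : A ∈ G.grade a)
    (hB : B ∈ G.lieSub V) (hb : B ∈ G.grade b) (ht : T ∈ G.grade t) :
    σ a A (G.br B T) = -((-1 : ℚ) ^ (b * t) • G.br (σ a A T) B) := by
  rw [G.antisymm hb ht, map_neg, map_smul, (h.isDerivation_σ (lieSub_left_le hA) ha).leibniz ht,
    h.σ_eq_zero hA ha hB, map_zero, smul_zero, add_zero]

/-- The derivation `δ_A = [D, σ_A] - ad A` of degree `|A|`. -/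
def defect (G : GLA Lc) (D : Lc →ₗ[ℚ] Lc) (σ : ℤ → Lc → (Lc →ₗ[ℚ] Lc)) (a : ℤ) (A : Lc) :
    Lc →ₗ[ℚ] Lc :=
  gradedCommutator (-1) (a + 1) D (σ a A) - G.br A

theorem defect_apply (a : ℤ) (A x : Lc) :
    defect G D σ a A x = D (σ a A x) + (-1 : ℚ) ^ a • σ a A (D x) - G.br A x := by
  simp only [defect, LinearMap.sub_apply, gradedCommutator_apply]
  match_scalars <;> grind [neg_one_zpow_eq_ite, Int.even_add]

theorem isDerivation_defect (h : IsStarSetting G V W D σ) (hA : A ∈ G.lieSub (V ⊔ W))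
    (ha : A ∈ G.grade a) : G.IsDerivation a (defect G D σ a A) := by
  have hD := h.isDerivation_D.gradedCommutator (h.isDerivation_σ hA ha)
  rw [show -1 + (a + 1) = a by ring] at hD
  exact hD.sub (isDerivation_br ha)

theorem D_σ_right (h : IsStarSetting G V W D σ) (hw : w ∈ W j) (hA : A ∈ G.lieSub V) :
    D (σ j w A) = -G.br w A := by
  have hwj := h.right_le j hw
  have hwL := lieSub_right_le (p := V) (le_lieSub (G := G) j hw)
  have commutator_isDerivation := h.isDerivation_D.gradedCommutator (h.isDerivation_σ hwL hwj)
  rw [show -1 + (j + 1) = j by ring] at commutator_isDerivation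
  have commutator_eq := commutator_isDerivation.eqOn_lieSub ((isDerivation_br hwj).smul (-1))
    h.left_le (fun {i v} hv => by
      rw [gradedCommutator_apply, h.D_left hv, map_zero, smul_zero, sub_zero,
        h.σ_apply_left hwL hwj hv, map_smul, h.D_suspension hv hw, LinearMap.smul_apply,
        G.antisymm hwj (h.left_le i hv), mul_comm j i, neg_one_smul, neg_neg]) hA
  rwa [gradedCommutator_apply, h.D_eq_zero_left hA, map_zero, smul_zero, sub_zero,
    LinearMap.smul_apply, neg_one_smul] at commutator_eq

theorem defect_eq_zero (h : IsStarSetting G V W D σ) (hA : A ∈ G.lieSub V)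
    (ha : A ∈ G.grade a) (hT : T ∈ G.lieSub W) : defect G D σ a A T = 0 := by
  refine (h.isDerivation_defect (lieSub_left_le hA) ha).eq_zero_of_mem_lieSub h.right_le
    (fun {j w} hw => ?_) hT
  rw [defect_apply, h.D_right hw, h.σ_apply_right (lieSub_left_le hA) ha hw, map_smul,
    h.D_σ_right hw hA, G.antisymm ha (h.right_le j hw), mul_comm j a, map_zero]
  module

theorem D_σ_left (h : IsStarSetting G V W D σ) (hA : A ∈ G.lieSub V) (ha : A ∈ G.grade a)
    (hT : T ∈ G.lieSub W) : D (σ a A T) = G.br A T := by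
  have defect_eq := h.defect_eq_zero hA ha hT
  rwa [defect_apply, h.D_eq_zero_right hT, map_zero, smul_zero, add_zero, sub_eq_zero]
    at defect_eq

theorem defect_left (h : IsStarSetting G V W D σ) (hA : A ∈ G.lieSub V) (ha : A ∈ G.grade a)
    (hx : x ∈ G.lieSub V) : defect G D σ a A x = -G.br A x := by
  rw [defect_apply, h.σ_eq_zero hA ha hx, h.D_eq_zero_left hx]
  simp only [map_zero, smul_zero, add_zero, zero_sub]

theorem defect_suspension (h : IsStarSetting G V W D σ) (hA : A ∈ G.lieSub V)
    (ha : A ∈ G.grade a) (hv : v ∈ V i) (hw : w ∈ W j) :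
    defect G D σ a A (σ i v w) =
      -((-1 : ℚ) ^ ((i + a) * j + a) • G.br (σ j w A) v) - G.br A (σ i v w) := by
  rw [defect_apply, h.σ_suspension (lieSub_left_le hA) ha hv hw, h.D_suspension hv hw,
    h.σ_br hA ha (le_lieSub i hv) (h.left_le i hv) (h.right_le j hw),
    h.σ_apply_right (lieSub_left_le hA) ha hw, map_zero, zero_add, map_smul, LinearMap.smul_apply]
  match_scalars <;> grind [neg_one_zpow_eq_ite, Int.even_add]

theorem defect_σ_right (h : IsStarSetting G V W D σ) (hA : A ∈ G.lieSub V)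
    (ha : A ∈ G.grade a) (hw : w ∈ W j) (hx : x ∈ G.lieSub V) :
    defect G D σ a A (σ j w x) = -((-1 : ℚ) ^ (a * (j + 1)) • σ j w (G.br A x)) := by
  have hwj := h.right_le j hw
  have hwL := lieSub_right_le (p := V) (le_lieSub (G := G) j hw)
  have commutator_isDerivation := (h.isDerivation_defect (lieSub_left_le hA) ha).gradedCommutator
    (h.isDerivation_σ hwL hwj)
  have commutator_eq_zero := commutator_isDerivation.eq_zero_of_mem_lieSub h.left_le
    (fun {i v} hv => by
      rw [gradedCommutator_apply, h.defect_left hA ha (le_lieSub i hv), map_neg,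
        (h.isDerivation_σ hwL hwj).leibniz ha, h.σ_apply_left hwL hwj hv, map_smul,
        h.defect_suspension hA ha hv hw, map_smul]
      match_scalars <;> grind [neg_one_zpow_eq_ite, Int.even_add]) hx
  rw [gradedCommutator_apply, h.defect_left hA ha hx, map_neg, sub_eq_zero] at commutator_eq_zero
  rw [commutator_eq_zero, smul_neg]

theorem defect_σ_left (h : IsStarSetting G V W D σ) (hA : A ∈ G.lieSub V) (ha : A ∈ G.grade a)
    (hB : B ∈ G.lieSub V) (hb : B ∈ G.grade b) (hT : T ∈ G.lieSub W) :
    defect G D σ a A (σ b B T) = -((-1 : ℚ) ^ a • σ (a + b) (G.br A B) T) := by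
  have hAL := lieSub_left_le (q := W) hA
  have hBL := lieSub_left_le (q := W) hB
  have commutator_isDerivation := (h.isDerivation_defect hAL ha).gradedCommutator
    (h.isDerivation_σ hBL hb)
  have σ_br_isDerivation := h.isDerivation_σ (br_mem_lieSub hAL hBL) (G.br_mem ha hb)
  rw [add_assoc] at σ_br_isDerivation
  have commutator_eq := commutator_isDerivation.eqOn_lieSub
    (σ_br_isDerivation.smul (-(-1 : ℚ) ^ a)) h.right_le (fun {j w} hw => by
      rw [gradedCommutator_apply, h.defect_eq_zero hA ha (le_lieSub j hw), map_zero, smul_zero,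
        sub_zero, h.σ_apply_right hBL hb hw, map_smul, h.defect_σ_right hA ha hw hB,
        LinearMap.smul_apply,
        h.σ_apply_right (br_mem_lieSub hAL hBL) (G.br_mem ha hb) hw]
      match_scalars
      grind [neg_one_zpow_eq_ite, Int.even_add]) hT
  rw [gradedCommutator_apply, h.defect_eq_zero hA ha hT, map_zero, smul_zero, sub_zero]
    at commutator_eq
  rw [commutator_eq, LinearMap.smul_apply, neg_smul]

theorem D_σ_σ (h : IsStarSetting G V W D σ) (hA : A ∈ G.lieSub V) (ha : A ∈ G.grade a)
    (hB : B ∈ G.lieSub V) (hb : B ∈ G.grade b) (hT : T ∈ G.lieSub W) (ht : T ∈ G.grade t) :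
    D (σ a A (σ b B T)) = G.br A (σ b B T) - (-1 : ℚ) ^ a • σ (a + b) (G.br A B) T
      + (-1 : ℚ) ^ a • (-1 : ℚ) ^ (b * t) • G.br (σ a A T) B := by
  have defect_eq := h.defect_σ_left hA ha hB hb hT
  rw [defect_apply, h.D_σ_left hB hb hT, h.σ_br hA ha hB hb ht] at defect_eq
  linear_combination (norm := module) defect_eq

end IsStarSetting

namespace Mag

open GLA

variable {Lc : Type u} [AddCommGroup Lc] [Module ℚ Lc] {G : GLA Lc}
  {V W : ℤ → Submodule ℚ Lc} {D : Lc →ₗ[ℚ] Lc} {σ : ℤ → Lc → (Lc →ₗ[ℚ] Lc)} {t : ℤ} {T : Lc}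

theorem real_mem_lieSub (M : Mag V) : M.real G ∈ G.lieSub V := by
  induction M with
  | of i v hv => exact le_lieSub i hv
  | mul A B hA hB => exact br_mem_lieSub hA hB

theorem real_mem_grade (hV : ∀ i, V i ≤ G.grade i) (M : Mag V) : M.real G ∈ G.grade M.deg := by
  induction M with
  | of i v hv => exact hV i hv
  | mul A B hA hB => exact G.br_mem hA hB

theorem star_mem_grade (hV : ∀ i, V i ≤ G.grade i)
    (hσ : ∀ {a : ℤ} {A : Lc}, A ∈ G.lieSub V → A ∈ G.grade a → G.IsDerivation (a + 1) (σ a A))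
    (hT : T ∈ G.grade t) (M : Mag V) : M.star G σ t T ∈ G.grade (M.deg + t + 2) := by
  induction M with
  | of i v hv => exact zero_mem _
  | mul A B hA hB =>
    have hσσ := (hσ A.real_mem_lieSub (A.real_mem_grade hV)).map_mem
      ((hσ B.real_mem_lieSub (B.real_mem_grade hV)).map_mem hT)
    have hA := G.br_mem hA (B.real_mem_grade hV)
    have hB := G.br_mem (A.real_mem_grade hV) hB
    simp only [star, deg]
    refine add_mem (add_mem (Submodule.smul_mem _ _ ?_) (Submodule.smul_mem _ _ ?_)) ?_
    · convert hσσ using 2; ring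
    · convert hA using 2; ring
    · convert hB using 2; ring

end Mag

theorem statement14_general {Lc : Type u} [AddCommGroup Lc] [Module ℚ Lc] {G : GLA Lc}
    {V W : ℤ → Submodule ℚ Lc} {D : Lc →ₗ[ℚ] Lc} {σ : ℤ → Lc → (Lc →ₗ[ℚ] Lc)}
    (h : IsStarSetting G V W D σ) (M : Mag V) {t : ℤ} {T : Lc} (hT : T ∈ G.lieSub W)
    (ht : T ∈ G.grade t) :
    D (M.star G σ t T) =
      -(σ M.deg (M.real G) T) + (-1 : ℚ) ^ (M.deg * t) • σ t T (M.real G) := by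
  have hTL := GLA.lieSub_right_le (p := V) hT
  induction M with
  | of i v hv =>
    simp only [Mag.star, Mag.deg, Mag.real, map_zero]
    rw [h.σ_apply_left hTL ht hv]
    match_scalars
    grind [neg_one_zpow_eq_ite]
  | mul A B ihA ihB =>
    have hA := A.real_mem_lieSub (G := G)
    have hB := B.real_mem_lieSub (G := G)
    have ha := A.real_mem_grade h.left_le
    have hb := B.real_mem_grade h.left_le
    have hstar : A.star G σ t T ∈ G.grade (A.deg + t + 2) :=
      A.star_mem_grade h.left_le (fun hA => h.isDerivation_σ (GLA.lieSub_left_le hA)) ht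
    simp only [Mag.star, Mag.deg, Mag.real, map_add, map_smul]
    rw [h.D_σ_σ hA ha hB hb hT ht, h.D_br_left hstar hB, h.D_br_right hA ha, ihA, ihB,
      (h.isDerivation_σ hTL ht).leibniz ha]
    simp only [map_add, map_neg, map_smul, LinearMap.add_apply, LinearMap.neg_apply,
      LinearMap.smul_apply]
    match_scalars <;> grind [neg_one_zpow_eq_ite, Int.even_add]

/-- Lemma 3.17.  In the dgl `(L₁, D)` built from minimal Quillen models
of 2-cones, let `A ∈ 𝕃(V₀)`, let `Ā ∈ 𝕄(V₀)` be any representative of `A` (a magma element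
whose class is `A`), and let `T ∈ 𝕃(W₀)` be homogeneous of degree `t`.  Then
`D(Ā ⋆ T) = -σ_A(T) + (-1)^{|A||T|} σ_T(A)`. -/
theorem statement14
    {Lc : Type u} [AddCommGroup Lc] [Module ℚ Lc] (G : GLA Lc)
    (V0 V1 W0 W1 Sp : ℤ → Submodule ℚ Lc)
    -- the ambient free Lie algebra is reduced
    (hred : G.Reduced)
    (hV0 : ∀ i, V0 i ≤ G.grade i) (hV1 : ∀ i, V1 i ≤ G.grade i)
    (hW0 : ∀ i, W0 i ≤ G.grade i) (hW1 : ∀ i, W1 i ≤ G.grade i)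
    (hSp : ∀ i, Sp i ≤ G.grade i)
    -- the suspension `s(v ⊗ w)`, bilinear, of degree `|v|+|w|+1`; in `L₁` only
    -- `s(V₀⊗W₀) ⊕ s(V₁⊗W₀) ⊕ s(V₀⊗W₁)` is present
    (sus : Lc →ₗ[ℚ] Lc →ₗ[ℚ] Lc)
    (hsus00 : ∀ {i j : ℤ} {v w : Lc}, v ∈ V0 i → w ∈ W0 j → sus v w ∈ Sp (i + j + 1))
    (hsus10 : ∀ {i j : ℤ} {v w : Lc}, v ∈ V1 i → w ∈ W0 j → sus v w ∈ Sp (i + j + 1))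
    (hsus01 : ∀ {i j : ℤ} {v w : Lc}, v ∈ V0 i → w ∈ W1 j → sus v w ∈ Sp (i + j + 1))
    -- `L₁` is generated by `V ⊕ W ⊕ s(V₀⊗W₀) ⊕ s(V₁⊗W₀) ⊕ s(V₀⊗W₁)`
    (hgen : G.lieSub (fun i => V0 i ⊔ V1 i ⊔ W0 i ⊔ W1 i ⊔ Sp i) = ⊤)
    -- the derivations `σ_A` for homogeneous `A ∈ 𝕃(V ⊕ W)`
    (sg : ℤ → Lc → (Lc →ₗ[ℚ] Lc))
    (hsg_grade : ∀ {a : ℤ} {A : Lc}, A ∈ G.lieSub (fun i => V0 i ⊔ V1 i ⊔ W0 i ⊔ W1 i) →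
      A ∈ G.grade a → ∀ {n : ℤ} {x : Lc}, x ∈ G.grade n → sg a A x ∈ G.grade (n + a + 1))
    (hsg_der : ∀ {a : ℤ} {A : Lc}, A ∈ G.lieSub (fun i => V0 i ⊔ V1 i ⊔ W0 i ⊔ W1 i) →
      A ∈ G.grade a → ∀ {n : ℤ} (x y : Lc), x ∈ G.grade n →
      sg a A (G.br x y) = G.br (sg a A x) y + (-1 : ℚ) ^ ((a + 1) * n) • G.br x (sg a A y))
    (hsg_vw : ∀ {i j : ℤ} {v w : Lc}, v ∈ V0 i ⊔ V1 i → w ∈ W0 j → sg i v w = sus v w)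
    (hsg_vw' : ∀ {i j : ℤ} {v w : Lc}, v ∈ V0 i → w ∈ W1 j → sg i v w = sus v w)
    (hsg_wv : ∀ {i j : ℤ} {v w : Lc}, v ∈ V0 i ⊔ V1 i → w ∈ W0 j →
      sg j w v = (-1 : ℚ) ^ (i * j) • sus v w)
    (hsg_wv' : ∀ {i j : ℤ} {v w : Lc}, v ∈ V0 i → w ∈ W1 j →
      sg j w v = (-1 : ℚ) ^ (i * j) • sus v w)
    (hsg_vv : ∀ {i i' : ℤ} {v v' : Lc}, v ∈ V0 i ⊔ V1 i → v' ∈ V0 i' ⊔ V1 i' →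
      sg i v v' = 0)
    (hsg_ww : ∀ {j j' : ℤ} {w w' : Lc}, w ∈ W0 j ⊔ W1 j → w' ∈ W0 j' ⊔ W1 j' →
      sg j w w' = 0)
    (hsg_vS : ∀ {i k : ℤ} {v x : Lc}, v ∈ V0 i ⊔ V1 i → x ∈ Sp k → sg i v x = 0)
    (hsg_wS : ∀ {j k : ℤ} {w x : Lc}, w ∈ W0 j ⊔ W1 j → x ∈ Sp k → sg j w x = 0)
    (hsg_Av : ∀ {a : ℤ} {A : Lc}, A ∈ G.lieSub (fun i => V0 i ⊔ V1 i ⊔ W0 i ⊔ W1 i) →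
      A ∈ G.grade a → ∀ {i : ℤ} {v : Lc}, v ∈ V0 i ⊔ V1 i →
      sg a A v = (-1 : ℚ) ^ (i * a) • sg i v A)
    (hsg_Aw : ∀ {a : ℤ} {A : Lc}, A ∈ G.lieSub (fun i => V0 i ⊔ V1 i ⊔ W0 i ⊔ W1 i) →
      A ∈ G.grade a → ∀ {j : ℤ} {w : Lc}, w ∈ W0 j ⊔ W1 j →
      sg a A w = (-1 : ℚ) ^ (j * a) • sg j w A)
    (hsg_AS : ∀ {a : ℤ} {A : Lc}, A ∈ G.lieSub (fun i => V0 i ⊔ V1 i ⊔ W0 i ⊔ W1 i) →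
      A ∈ G.grade a → ∀ {k : ℤ} {x : Lc}, x ∈ Sp k → sg a A x = 0)
    -- the degree `-1` derivation `D` of `L₁`
    (D : Lc →ₗ[ℚ] Lc)
    (hD_grade : ∀ {i : ℤ} {x : Lc}, x ∈ G.grade i → D x ∈ G.grade (i - 1))
    (hD_der : ∀ {i : ℤ} (x y : Lc), x ∈ G.grade i →
      D (G.br x y) = G.br (D x) y + (-1 : ℚ) ^ ((-1 : ℤ) * i) • G.br x (D y))
    -- `D = ∂_V` on `V`, `D = ∂_W` on `W`, with `∂(V₀) = ∂(W₀) = 0`,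
    -- `∂(V₁) ⊆ 𝕃(V₀)` and `∂(W₁) ⊆ 𝕃(W₀)`
    (hD_V0 : ∀ {i : ℤ} {v : Lc}, v ∈ V0 i → D v = 0)
    (hD_W0 : ∀ {j : ℤ} {w : Lc}, w ∈ W0 j → D w = 0)
    (hD_V1 : ∀ {i : ℤ} {v : Lc}, v ∈ V1 i → D v ∈ G.lieSub V0)
    (hD_W1 : ∀ {j : ℤ} {w : Lc}, w ∈ W1 j → D w ∈ G.lieSub W0)
    -- minimality of the two Quillen models
    (hD_V1dec : ∀ {i : ℤ} {v : Lc}, v ∈ V1 i → D v ∈ G.dec)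
    (hD_W1dec : ∀ {j : ℤ} {w : Lc}, w ∈ W1 j → D w ∈ G.dec)
    -- the value of `D` on the suspension generators
    (hD_sus00 : ∀ {i j : ℤ} {v w : Lc}, v ∈ V0 i → w ∈ W0 j → D (sus v w) = G.br v w)
    (hD_sus10 : ∀ {i j : ℤ} {v w : Lc}, v ∈ V1 i → w ∈ W0 j →
      D (sus v w) = G.br v w - (-1 : ℚ) ^ ((i + 1) * j) • sg j w (D v))
    (hD_sus01 : ∀ {i j : ℤ} {v w : Lc}, v ∈ V0 i → w ∈ W1 j →
      D (sus v w) = G.br v w - (-1 : ℚ) ^ i • sg i v (D w))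
    -- `(L₁, D)` is a dgl
    (hDD : ∀ x : Lc, D (D x) = 0)
 :
    ∀ (M : Mag V0) (A : Lc), Mag.real G M = A → A ∈ G.lieSub V0 →
      A ∈ G.grade (Mag.deg M) →
    ∀ {t : ℤ} {T : Lc}, T ∈ G.lieSub W0 → T ∈ G.grade t →
      D (Mag.star G sg t M T)
        = -(sg (Mag.deg M) A T) + (-1 : ℚ) ^ (Mag.deg M * t) • sg t T A := by
  have star_setting : IsStarSetting G V0 W0 D sg :=
    have mem_lieSub {A : Lc} (hA : A ∈ G.lieSub (V0 ⊔ W0)) :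
        A ∈ G.lieSub (fun i => V0 i ⊔ V1 i ⊔ W0 i ⊔ W1 i) :=
      GLA.lieSub_mono (fun i => sup_le (le_sup_of_le_left (le_sup_of_le_left le_sup_left))
        (le_sup_of_le_left le_sup_right)) hA
    { left_le := hV0
      right_le := hW0
      isDerivation_D := ⟨hD_grade, fun hx y => hD_der _ y hx⟩
      D_left := hD_V0
      D_right := hD_W0
      isDerivation_σ := fun hA ha =>
        ⟨fun hx => add_assoc _ _ (1 : ℤ) ▸ hsg_grade (mem_lieSub hA) ha hx,
          fun hx y => hsg_der (mem_lieSub hA) ha _ y hx⟩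
      σ_apply_left := fun hA ha hv => hsg_Av (mem_lieSub hA) ha (Submodule.mem_sup_left hv)
      σ_apply_right := fun hA ha hw => hsg_Aw (mem_lieSub hA) ha (Submodule.mem_sup_left hw)
      σ_left_left := fun hu hv => hsg_vv (Submodule.mem_sup_left hu) (Submodule.mem_sup_left hv)
      σ_suspension := fun hA ha hv hw => by
        rw [hsg_vw (Submodule.mem_sup_left hv) hw, hsg_AS (mem_lieSub hA) ha (hsus00 hv hw)]
      D_suspension := fun hv hw => by rw [hsg_vw (Submodule.mem_sup_left hv) hw, hD_sus00 hv hw] }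
  rintro M _ rfl - - t T hT ht
  exact statement14_general star_setting M hT ht
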